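/- (Main trade-off theorem, channel form.) Let N ≥ 1 and b, e be finite dimensions. Let Λ be a linear trace-preserving map from matrices on ℂ^({0,1}^N) to matrices on ℂ^b ⊗ ℂ^e whose normalized Choi matrix Θ_Λ := 2^(−N) Σ_{z,z'} (e_z e_{z'}^*) ⊗ Λ(e_z e_{z'}^*) is positive semidefinite (i.e., Λ is completely positive). Let T, S be finite sets; for each t ∈ T let 𝓔_t ⊆ {0,1}^N, pairwise disjoint over t, with orthogonal projections (E^t_z)_{z∈𝓔_t} on ℂ^b, mutually orthogonal within each t, such that tr(Λ(Z_z) (E^t_z ⊗ I_e)) = 1 for all z ∈ 𝓔_t; for each s ∈ S let 𝓕_s ⊆ {0,1}^N, pairwise disjoint over s, with orthogonal projections (F^s_x)_{x∈𝓕_s} on ℂ^e, mutually orthogonal within each s, such that tr(Λ(X_x) (I_b ⊗ F^s_x)) = 1 for all x ∈ 𝓕_s. Then Σ_{t∈T} |𝓔_t| + Σ_{s∈S} |𝓕_s| ≤ 2^N (1 + (2 |T| |S| 2^(−N))^{1/2}); in particular, if |T| ≤ 2^{l+1} and |S| ≤ 2^{m+1}, then Σ_{t∈T} |𝓔_t|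 + Σ_{s∈S} |𝓕_s| ≤ 2^N (1 + 2^{(l+m−N+3)/2}). -/

import Mathlib

/-!
The Choi matrix `Θ` of the channel is a state on `A ⊗ B ⊗ E`, and measuring `A ⊗ M` on it gives
`tr (Θ (A ⊗ M)) = 2^(-N) tr (Λ(Aᵀ) M)` (`trace_choiMatrix_mul`). The matrices `Z_z` and `X_x` are
symmetric, so the projections
`P t = ∑ z ∈ 𝓔 t, Z_z ⊗ E^t_z ⊗ 1` and `Q s = ∑ x ∈ 𝓕 s, X_x ⊗ 1 ⊗ F^s_x`
have expectations `2^(-N) |𝓔 t|` and `2^(-N) |𝓕 s|`. It therefore suffices to show the operator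
inequality `∑ P t + ∑ Q s ≤ 1 + √(|T| |S| 2^(-N))`, which even saves a factor `2` under the root.

Disjointness of the `𝓔 t` makes the `P t` mutually orthogonal, and similarly for the `Q s`.
Since the two bases are mutually unbiased and the projections `F^s_x` (`x ∈ 𝓕 s`) are mutually
orthogonal, `Q s P t Q s = 2^(-N) Q s R t Q s` with the projection `R t = ∑ z, 1 ⊗ E^t_z ⊗ 1`
(`sandwich`). Hence each block `P t Q s` has norm at most `2^(-N/2)` (`norm_sq_le_of_sandwich`).
Cauchy–Schwarz over the `|T| |S|` blocks bounds the overlap of the projections `∑ P t` and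
`∑ Q s`, hence the norm of their sum (`sum_norm_sq_le`).
-/

open Matrix
open scoped Kronecker ComplexOrder

noncomputable section

/-- Standard basis vector `e_z` of `ℂ^({0,1}^N)`. -/
def ketVec (N : ℕ) (z : Fin N → Bool) : (Fin N → Bool) → ℂ := fun w =>
  if w = z then 1 else 0

/-- Hadamard basis vector `x̄(w) = 2^(−N/2)·(−1)^(x·w)`. -/
def hadVec (N : ℕ) (x : Fin N → Bool) : (Fin N → Bool) → ℂ := fun w =>
  ((-1 : ℂ) ^ (Finset.univ.filter fun i => x i && w i).card) / ((Real.sqrt 2 ^ N : ℝ) : ℂ)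

/-- Outer product `v v^*`. -/
def outer {ι : Type*} (v : ι → ℂ) : Matrix ι ι ℂ :=
  Matrix.vecMulVec v (fun j => (starRingEnd ℂ) (v j))

/-- Matrix unit `e_z e_{z'}^*`. -/
def matUnit (N : ℕ) (z z' : Fin N → Bool) : Matrix (Fin N → Bool) (Fin N → Bool) ℂ :=
  Matrix.vecMulVec (ketVec N z) (fun w => (starRingEnd ℂ) (ketVec N z' w))

/-- `Z_z = e_z e_z^*`. -/
def Zproj (N : ℕ) (z : Fin N → Bool) : Matrix (Fin N → Bool) (Fin N → Bool) ℂ :=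
  outer (ketVec N z)

/-- `X_x = x̄ x̄^*`. -/
def Xproj (N : ℕ) (x : Fin N → Bool) : Matrix (Fin N → Bool) (Fin N → Bool) ℂ :=
  outer (hadVec N x)

/-- The normalized Choi matrix of a channel into `ℂ^b ⊗ ℂ^e`. -/
def choiMatrix (N b e : ℕ)
    (Λ : Matrix (Fin N → Bool) (Fin N → Bool) ℂ →ₗ[ℂ]
      Matrix (Fin b × Fin e) (Fin b × Fin e) ℂ) :
    Matrix ((Fin N → Bool) × (Fin b × Fin e)) ((Fin N → Bool) × (Fin b × Fin e)) ℂ :=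
  ((2 : ℂ) ^ N)⁻¹ • ∑ z, ∑ z', matUnit N z z' ⊗ₖ Λ (matUnit N z z')

/-! ### Two families of projections on a Hilbert space -/

section Hilbert

variable {H : Type*} [NormedAddCommGroup H] [InnerProductSpace ℂ H] [CompleteSpace H]

/-- A projection is self-adjoint and idempotent, so it may be inserted in the other slot. -/
lemma inner_starProjection_left {p : H →L[ℂ] H} (hp : IsStarProjection p) (u v : H) :
    inner ℂ (p u) v = inner ℂ (p u) (p v) := by
  have hsymm := (ContinuousLinearMap.isSelfAdjoint_iff_isSymmetric.mp hp.isSelfAdjoint)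
  have h := hsymm (p u) v
  have h2 : p (p u) = p u := by
    have := congrArg (fun f : H →L[ℂ] H => f u) hp.isIdempotentElem.eq
    simpa using this
  simp only [ContinuousLinearMap.coe_coe, h2] at h
  exact h

lemma norm_sq_sum_of_orthogonal {T : Type*} [Fintype T] {P : T → H →L[ℂ] H}
    (hP : ∀ t, IsStarProjection (P t)) (hP0 : ∀ t t', t ≠ t' → P t * P t' = 0) (v : H) :
    ‖∑ t, P t v‖ ^ 2 = ∑ t, ‖P t v‖ ^ 2 := by
  classical
  have h : inner ℂ (∑ t, P t v) (∑ t, P t v) = ∑ t, inner ℂ (P t v) (P t v) := by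
    rw [sum_inner]
    refine Finset.sum_congr rfl fun t _ => ?_
    rw [inner_sum, Finset.sum_eq_single t]
    · intro t' _ hne
      rw [inner_starProjection_left (hP t)]
      have : P t (P t' v) = 0 := by
        have := congrArg (fun f : H →L[ℂ] H => f v) (hP0 t t' hne.symm)
        simpa using this
      rw [this, inner_zero_right]
    · simp
  simp only [inner_self_eq_norm_sq_to_K] at h
  exact_mod_cast h

/-- Norm bound from a compression identity: if `Q P Q = κ Q R Q` for projections `P, Q, R`, then
`‖P Q v‖² = κ ‖R Q v‖² ≤ κ ‖Q v‖²`. -/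
lemma norm_sq_le_of_sandwich {P Q R : H →L[ℂ] H} (hP : IsStarProjection P)
    (hQ : IsStarProjection Q) (hR : IsStarProjection R) {κ : ℝ} (hκ : 0 ≤ κ)
    (h : Q * P * Q = (κ : ℂ) • (Q * R * Q)) (v : H) :
    ‖P (Q v)‖ ^ 2 ≤ κ * ‖Q v‖ ^ 2 := by
  have key : ∀ A : H →L[ℂ] H, IsStarProjection A →
      ((‖A (Q v)‖ ^ 2 : ℝ) : ℂ) = inner ℂ ((Q * A * Q) v) v := by
    intro A hA
    have h1 := inner_starProjection_left hA (Q v) (Q v)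
    have hs := (ContinuousLinearMap.isSelfAdjoint_iff_isSymmetric.mp hQ.isSelfAdjoint)
    have h2 : inner ℂ (Q (A (Q v))) v = inner ℂ (A (Q v)) (Q v) := hs (A (Q v)) v
    rw [inner_self_eq_norm_sq_to_K] at h1
    simp only [mul_apply_eq_comp]
    rw [h2, h1]
    push_cast
    rfl
  have h1 : ‖P (Q v)‖ ^ 2 = κ * ‖R (Q v)‖ ^ 2 := by
    have e := key P hP
    rw [h, _root_.smul_apply, inner_smul_left, ← key R hR, Complex.conj_ofReal] at e
    exact_mod_cast e
  have h2 : ‖R (Q v)‖ ≤ ‖Q v‖ := by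
    calc _ ≤ ‖R‖ * ‖Q v‖ := R.le_opNorm _
      _ ≤ 1 * ‖Q v‖ := by gcongr; exact hR.norm_le
      _ = _ := one_mul _
  rw [h1]
  gcongr

lemma re_inner_sum_starProjection {ι : Type*} [Fintype ι] {A : ι → H →L[ℂ] H}
    (hA : ∀ i, IsStarProjection (A i)) (v : H) :
    RCLike.re (inner ℂ (∑ i, A i v) v) = ∑ i, ‖A i v‖ ^ 2 := by
  rw [sum_inner, map_sum]
  refine Finset.sum_congr rfl fun i _ => ?_
  rw [inner_starProjection_left (hA i), inner_self_eq_norm_sq]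

lemma sum_le_sqrt_card_mul_sqrt_sum_sq {ι : Type*} [Fintype ι] (f : ι → ℝ) :
    ∑ i, f i ≤ √(Fintype.card ι) * √(∑ i, f i ^ 2) := by
  rw [← Real.sqrt_mul (by positivity)]
  exact Real.le_sqrt_of_sq_le
    (by simpa using sq_sum_le_card_mul_sum_sq (s := Finset.univ) (f := f))

/-- Uncertainty relation for two families of mutually orthogonal projections: if every block
`P t Q s` has norm at most `√κ`, then `∑ P t` and `∑ Q s` have overlap at most
`c = √(|T| |S| κ)`, and two projections with overlap `c` have sum at most `1 + c`. -/
lemma sum_norm_sq_le {T S : Type*} [Fintype T] [Fintype S]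
    {P : T → H →L[ℂ] H} {Q : S → H →L[ℂ] H}
    (hP : ∀ t, IsStarProjection (P t)) (hP0 : ∀ t t', t ≠ t' → P t * P t' = 0)
    (hQ : ∀ s, IsStarProjection (Q s)) (hQ0 : ∀ s s', s ≠ s' → Q s * Q s' = 0)
    {κ : ℝ} (hκ : 0 ≤ κ) (hPQ : ∀ t s v, ‖P t (Q s v)‖ ^ 2 ≤ κ * ‖Q s v‖ ^ 2) (v : H) :
    ∑ t, ‖P t v‖ ^ 2 + ∑ s, ‖Q s v‖ ^ 2 ≤
      (1 + Real.sqrt (Fintype.card T * Fintype.card S * κ)) * ‖v‖ ^ 2 := by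
  set a : H := ∑ t, P t v with ha
  set b : H := ∑ s, Q s v with hb
  set c : ℝ := Real.sqrt (Fintype.card T * Fintype.card S * κ) with hc
  have hc0 : 0 ≤ c := Real.sqrt_nonneg _
  have hna : ‖a‖ ^ 2 = ∑ t, ‖P t v‖ ^ 2 := norm_sq_sum_of_orthogonal hP hP0 v
  have hnb : ‖b‖ ^ 2 = ∑ s, ‖Q s v‖ ^ 2 := norm_sq_sum_of_orthogonal hQ hQ0 v
  rw [← hna, ← hnb]
  have hsum : ‖a‖ ^ 2 + ‖b‖ ^ 2 ≤ ‖a + b‖ * ‖v‖ := by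
    have h1 : RCLike.re (inner ℂ (a + b) v) = ‖a‖ ^ 2 + ‖b‖ ^ 2 := by
      rw [inner_add_left, map_add, hna, hnb, ha, hb]
      congr 1
      · exact re_inner_sum_starProjection hP v
      · exact re_inner_sum_starProjection hQ v
    rw [← h1]
    exact re_inner_le_norm _ _
  -- Cauchy–Schwarz over the `|T| |S|` blocks `⟪P t v, Q s v⟫ = ⟪P t v, P t (Q s v)⟫`
  have hcross : RCLike.re (inner ℂ a b) ≤ c * (‖a‖ * ‖b‖) := by
    have h1 : RCLike.re (inner ℂ a b) ≤ ∑ t, ∑ s, √κ * (‖P t v‖ * ‖Q s v‖) := by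
      rw [ha, hb, sum_inner, map_sum]
      refine Finset.sum_le_sum fun t _ => ?_
      rw [inner_sum, map_sum]
      refine Finset.sum_le_sum fun s _ => ?_
      rw [inner_starProjection_left (hP t)]
      refine (re_inner_le_norm _ _).trans ?_
      have h2 : ‖P t (Q s v)‖ ≤ √κ * ‖Q s v‖ := by
        refine abs_le_of_sq_le_sq' ?_ (by positivity) |>.2
        rw [mul_pow, Real.sq_sqrt hκ]
        exact hPQ t s v
      calc _ ≤ ‖P t v‖ * (√κ * ‖Q s v‖) := by gcongr
        _ = _ := by ring
    have hsa : √(∑ t, ‖P t v‖ ^ 2) = ‖a‖ := by rw [← hna]; exact Real.sqrt_sq (norm_nonneg _)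
    have hsb : √(∑ s, ‖Q s v‖ ^ 2) = ‖b‖ := by rw [← hnb]; exact Real.sqrt_sq (norm_nonneg _)
    have h3 := sum_le_sqrt_card_mul_sqrt_sum_sq (fun t => ‖P t v‖)
    have h4 := sum_le_sqrt_card_mul_sqrt_sum_sq (fun s => ‖Q s v‖)
    rw [hsa] at h3
    rw [hsb] at h4
    calc _ ≤ _ := h1
      _ = √κ * ((∑ t, ‖P t v‖) * ∑ s, ‖Q s v‖) := by
        rw [Finset.sum_mul_sum, Finset.mul_sum]; simp_rw [Finset.mul_sum]
      _ ≤ √κ * ((√(Fintype.card T) * ‖a‖) * (√(Fintype.card S) * ‖b‖)) := by gcongr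
      _ = _ := by
        rw [hc, Real.sqrt_mul (by positivity), Real.sqrt_mul (by positivity)]; ring
  have hsq : ‖a + b‖ ^ 2 ≤ (1 + c) * (‖a‖ ^ 2 + ‖b‖ ^ 2) := by
    rw [norm_add_sq (𝕜 := ℂ)]
    nlinarith [mul_nonneg hc0 (sq_nonneg (‖a‖ - ‖b‖))]
  -- with `σ = ‖a‖² + ‖b‖²`, this gives `σ² ≤ (1 + c) σ ‖v‖²`, and `σ` can be cancelled
  have hfin : (‖a‖ ^ 2 + ‖b‖ ^ 2) ^ 2 ≤ (1 + c) * (‖a‖ ^ 2 + ‖b‖ ^ 2) * ‖v‖ ^ 2 := by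
    calc _ ≤ (‖a + b‖ * ‖v‖) ^ 2 := by gcongr
      _ = ‖a + b‖ ^ 2 * ‖v‖ ^ 2 := by ring
      _ ≤ _ := by gcongr
  rcases (by positivity : 0 ≤ ‖a‖ ^ 2 + ‖b‖ ^ 2).eq_or_lt with h0 | h0
  · rw [← h0]; positivity
  · refine le_of_mul_le_mul_left ?_ h0
    calc _ = (‖a‖ ^ 2 + ‖b‖ ^ 2) ^ 2 := by ring
      _ ≤ _ := hfin
      _ = _ := by ring

end Hilbert

/-! ### Projections on tensor products -/

section Projections

lemma isStarProjection_sum {A ι : Type*} [NonUnitalSemiring A] [StarRing A] {s : Finset ι} {p : ι → A}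
    (hp : ∀ i ∈ s, IsStarProjection (p i))
    (h0 : ∀ i ∈ s, ∀ j ∈ s, i ≠ j → p i * p j = 0) : IsStarProjection (∑ i ∈ s, p i) := by
  classical
  constructor
  · rw [IsIdempotentElem, Finset.sum_mul_sum]
    refine Finset.sum_congr rfl fun i hi => ?_
    rw [Finset.sum_eq_single_of_mem i hi fun j hj hne => h0 i hi j hj hne.symm]
    exact (hp i hi).isIdempotentElem
  · rw [IsSelfAdjoint, star_sum]
    exact Finset.sum_congr rfl fun i hi => (hp i hi).isSelfAdjoint

lemma isStarProjection_kronecker {m n : Type*} [Fintype m] [Fintype n]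
    {A : Matrix m m ℂ} {B : Matrix n n ℂ} (hA : IsStarProjection A) (hB : IsStarProjection B) :
    IsStarProjection (A ⊗ₖ B) := by
  constructor
  · rw [IsIdempotentElem, ← mul_kronecker_mul, hA.isIdempotentElem.eq, hB.isIdempotentElem.eq]
  · have h1 : Aᴴ = A := hA.isSelfAdjoint
    have h2 : Bᴴ = B := hB.isSelfAdjoint
    rw [IsSelfAdjoint, star_eq_conjTranspose, conjTranspose_kronecker, h1, h2]

variable {ι m n : Type*} [Fintype m] [Fintype n]

/-- A measurement controlled by an orthogonal family of projections is a projection. -/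
lemma isStarProjection_sum_kronecker {V : ι → Matrix m m ℂ} {G : ι → Matrix n n ℂ} {s : Finset ι}
    (hV : ∀ i, IsStarProjection (V i)) (hV0 : ∀ i j, i ≠ j → V i * V j = 0)
    (hG : ∀ i ∈ s, IsStarProjection (G i)) : IsStarProjection (∑ i ∈ s, V i ⊗ₖ G i) :=
  isStarProjection_sum (p := fun i => V i ⊗ₖ G i) (fun i hi => isStarProjection_kronecker (hV i) (hG i hi))
    fun i _ j _ hij => by rw [← mul_kronecker_mul, hV0 i j hij, zero_kronecker]

lemma sum_kronecker_mul_sum_kronecker_eq_zero {V : ι → Matrix m m ℂ} {G G' : ι → Matrix n n ℂ}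
    {s s' : Finset ι} (hV0 : ∀ i j, i ≠ j → V i * V j = 0) (hs : Disjoint s s') :
    (∑ i ∈ s, V i ⊗ₖ G i) * (∑ i ∈ s', V i ⊗ₖ G' i) = 0 := by
  rw [Finset.sum_mul_sum]
  refine Finset.sum_eq_zero fun i hi => Finset.sum_eq_zero fun j hj => ?_
  rw [← mul_kronecker_mul, hV0 i j (Finset.disjoint_left.mp hs hi |> fun h e => h (e ▸ hj)),
    zero_kronecker]

/-- The compression identity `Q P Q = κ Q R Q` for `P = ∑ V_z ⊗ E_z ⊗ 1`,
`Q = ∑ W_x ⊗ 1 ⊗ F_x`, `R = ∑ 1 ⊗ E_z ⊗ 1`. Orthogonality of the `F_x` kills the terms with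
distinct `x, x'`, and the overlap condition `W_x V_z W_x = κ W_x` makes the others proportional. -/
lemma sandwich {ι k : Type*} [Fintype k] [DecidableEq m] [DecidableEq n] [DecidableEq k]
    {V W : ι → Matrix m m ℂ} {κ : ℂ}
    (hW : ∀ x, W x * W x = W x) (hWV : ∀ x z, W x * V z * W x = κ • W x)
    {E : ι → Matrix n n ℂ} {F : ι → Matrix k k ℂ} {s s' : Finset ι}
    (hF : ∀ x ∈ s', ∀ x' ∈ s', x ≠ x' → F x * F x' = 0) :
    (∑ x ∈ s', W x ⊗ₖ ((1 : Matrix n n ℂ) ⊗ₖ F x)) *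
        (∑ z ∈ s, V z ⊗ₖ (E z ⊗ₖ (1 : Matrix k k ℂ))) *
        (∑ x ∈ s', W x ⊗ₖ ((1 : Matrix n n ℂ) ⊗ₖ F x)) =
      κ • ((∑ x ∈ s', W x ⊗ₖ ((1 : Matrix n n ℂ) ⊗ₖ F x)) *
        (∑ z ∈ s, (1 : Matrix m m ℂ) ⊗ₖ (E z ⊗ₖ (1 : Matrix k k ℂ))) *
        (∑ x ∈ s', W x ⊗ₖ ((1 : Matrix n n ℂ) ⊗ₖ F x))) := by
  classical
  simp only [Finset.sum_mul, Finset.mul_sum, Finset.smul_sum, ← mul_kronecker_mul, one_mul,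
    mul_one]
  refine Finset.sum_congr rfl fun x hx => Finset.sum_congr rfl fun z _ =>
    Finset.sum_congr rfl fun x' hx' => ?_
  by_cases h : x' = x
  · subst h
    rw [hWV, hW, smul_kronecker]
  · simp [hF x' hx' x hx h]

end Projections

/-! ### The two mutually unbiased bases -/

section Bases

variable {N : ℕ}

lemma outer_mul_outer {ι : Type*} [Fintype ι] (u v : ι → ℂ) :
    outer u * outer v = (star u ⬝ᵥ v) • vecMulVec u (star v) := by
  change vecMulVec u (star u) * vecMulVec v (star v) = _
  rw [vecMulVec_mul_vecMulVec, vecMulVec_smul]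

lemma outer_conjTranspose {ι : Type*} (u : ι → ℂ) : (outer u)ᴴ = outer u := by
  change (vecMulVec u (star u))ᴴ = vecMulVec u (star u)
  rw [conjTranspose_vecMulVec, star_star]

lemma isStarProjection_outer {ι : Type*} [Fintype ι] {u : ι → ℂ} (hu : star u ⬝ᵥ u = 1) :
    IsStarProjection (outer u) := by
  refine ⟨?_, outer_conjTranspose u⟩
  rw [IsIdempotentElem, outer_mul_outer, hu, one_smul]
  rfl

lemma ketVec_dot (z : Fin N → Bool) (v : (Fin N → Bool) → ℂ) :
    star (ketVec N z) ⬝ᵥ v = v z := by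
  simp [dotProduct, ketVec, apply_ite]

lemma hadVec_star (x : Fin N → Bool) : star (hadVec N x) = hadVec N x := by
  ext w
  simp [hadVec]

lemma sqrt_two_pow_mul_self : ((Real.sqrt 2 ^ N : ℝ) : ℂ) * ((Real.sqrt 2 ^ N : ℝ) : ℂ) = 2 ^ N := by
  rw [← Complex.ofReal_mul, ← mul_pow, Real.mul_self_sqrt (by norm_num)]
  push_cast
  rfl

lemma hadVec_mul_self (x w : Fin N → Bool) : hadVec N x w * hadVec N x w = ((2 : ℂ) ^ N)⁻¹ := by
  rw [hadVec, div_mul_div_comm, sqrt_two_pow_mul_self, ← mul_pow]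
  simp

lemma hadVec_dot_self (x : Fin N → Bool) : star (hadVec N x) ⬝ᵥ hadVec N x = 1 := by
  rw [hadVec_star, dotProduct]
  simp [hadVec_mul_self]

lemma hadVec_dot_of_ne {x y : Fin N → Bool} (h : x ≠ y) :
    star (hadVec N x) ⬝ᵥ hadVec N y = 0 := by
  rw [hadVec_star, dotProduct]
  have hsign : ∀ x w : Fin N → Bool,
      ((-1 : ℂ) ^ (Finset.univ.filter fun i => x i && w i).card) =
        ∏ i, if x i && w i then (-1 : ℂ) else 1 := by
    intro x w
    rw [Finset.prod_ite]
    simp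
  simp only [hadVec, div_mul_div_comm, ← Finset.sum_div, hsign, ← Finset.prod_mul_distrib]
  -- the character sum factors over coordinates, and a coordinate where `x, y` differ gives `0`
  have hfac := Finset.prod_univ_sum (fun _ : Fin N => (Finset.univ : Finset Bool))
    (fun i c => (if x i && c then (-1 : ℂ) else 1) * (if y i && c then (-1 : ℂ) else 1))
  rw [Fintype.piFinset_univ] at hfac
  rw [← hfac]
  obtain ⟨i, hi⟩ := Function.ne_iff.mp h
  rw [Finset.prod_eq_zero (Finset.mem_univ i), zero_div]
  cases hx : x i <;> cases hy : y i <;> simp_all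

lemma isStarProjection_Zproj (z : Fin N → Bool) : IsStarProjection (Zproj N z) :=
  isStarProjection_outer (by rw [ketVec_dot]; simp [ketVec])

lemma Zproj_mul_of_ne (z z' : Fin N → Bool) (h : z ≠ z') : Zproj N z * Zproj N z' = 0 := by
  rw [Zproj, Zproj, outer_mul_outer, ketVec_dot, ketVec, if_neg h, zero_smul]

lemma isStarProjection_Xproj (x : Fin N → Bool) : IsStarProjection (Xproj N x) :=
  isStarProjection_outer (hadVec_dot_self x)

lemma Xproj_mul_of_ne (x x' : Fin N → Bool) (h : x ≠ x') : Xproj N x * Xproj N x' = 0 := by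
  rw [Xproj, Xproj, outer_mul_outer, hadVec_dot_of_ne h, zero_smul]

/-- The two bases are mutually unbiased. -/
lemma Xproj_mul_Zproj_mul_Xproj (x z : Fin N → Bool) :
    Xproj N x * Zproj N z * Xproj N x = ((2 : ℂ) ^ N)⁻¹ • Xproj N x := by
  rw [← hadVec_mul_self x z]
  ext i j
  have hs : ∀ w, (starRingEnd ℂ) (hadVec N x w) = hadVec N x w := fun w =>
    congrFun (hadVec_star x) w
  simp only [mul_apply, Xproj, Zproj, outer, vecMulVec_apply, hs, ketVec, Matrix.smul_apply,
    smul_eq_mul]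
  simp
  ring

lemma Zproj_transpose (z : Fin N → Bool) : (Zproj N z)ᵀ = Zproj N z := by
  ext i j
  simp [Zproj, outer, vecMulVec_apply, ketVec, mul_comm]

lemma Xproj_transpose (x : Fin N → Bool) : (Xproj N x)ᵀ = Xproj N x := by
  ext i j
  have hs : ∀ w, (starRingEnd ℂ) (hadVec N x w) = hadVec N x w := fun w =>
    congrFun (hadVec_star x) w
  simp only [Xproj, outer, vecMulVec_apply, transpose_apply, hs, mul_comm]

end Bases

/-! ### The Choi matrix -/

section Choi

lemma sum_smul_matUnit (N : ℕ) (A : Matrix (Fin N → Bool) (Fin N → Bool) ℂ) :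
    ∑ z, ∑ z', A z z' • matUnit N z z' = A := by
  ext i j
  simp [Matrix.sum_apply, matUnit, ketVec, vecMulVec_apply, apply_ite]

lemma trace_matUnit_mul (N : ℕ) (z z' : Fin N → Bool)
    (A : Matrix (Fin N → Bool) (Fin N → Bool) ℂ) : trace (matUnit N z z' * A) = A z' z := by
  simp [trace, mul_apply, matUnit, ketVec, vecMulVec_apply, apply_ite]

/-- Measuring the Choi matrix with `A ⊗ M` amounts to sending `Aᵀ` through the channel. -/
lemma trace_choiMatrix_mul (N b e : ℕ)
    (Λ : Matrix (Fin N → Bool) (Fin N → Bool) ℂ →ₗ[ℂ]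
      Matrix (Fin b × Fin e) (Fin b × Fin e) ℂ)
    (A : Matrix (Fin N → Bool) (Fin N → Bool) ℂ) (M : Matrix (Fin b × Fin e) (Fin b × Fin e) ℂ) :
    trace (choiMatrix N b e Λ * (A ⊗ₖ M)) = ((2 : ℂ) ^ N)⁻¹ * trace (Λ Aᵀ * M) := by
  conv_rhs => rw [← sum_smul_matUnit N Aᵀ]
  simp only [choiMatrix, smul_mul_assoc, trace_smul, Finset.sum_mul, ← mul_kronecker_mul,
    trace_sum, trace_kronecker, trace_matUnit_mul, map_sum, map_smul, transpose_apply, smul_eq_mul]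

open scoped MatrixOrder in
lemma trace_mul_nonneg {n : Type*} [Fintype n] [DecidableEq n] {A B : Matrix n n ℂ}
    (hA : A.PosSemidef) (hB : B.PosSemidef) : 0 ≤ trace (A * B) := by
  obtain ⟨C, rfl⟩ := CStarAlgebra.nonneg_iff_eq_star_mul_self.mp hA.nonneg
  rw [star_eq_conjTranspose, Matrix.mul_assoc, trace_mul_comm]
  exact (hB.mul_mul_conjTranspose_same C).trace_nonneg

end Choi

/-! ### The operator inequality and the trade-off -/

/-- Matrix form of `sum_norm_sq_le`: `∑ P t + ∑ Q s ≤ 1 + √(|T| |S| κ)`. -/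
lemma posSemidef_sub_sum_sub_sum {n T S : Type*} [Fintype n] [DecidableEq n] [Fintype T]
    [Fintype S] {P : T → Matrix n n ℂ} {Q : S → Matrix n n ℂ} {R : T → Matrix n n ℂ}
    (hP : ∀ t, IsStarProjection (P t)) (hP0 : ∀ t t', t ≠ t' → P t * P t' = 0)
    (hQ : ∀ s, IsStarProjection (Q s)) (hQ0 : ∀ s s', s ≠ s' → Q s * Q s' = 0)
    (hR : ∀ t, IsStarProjection (R t)) {κ : ℝ} (hκ : 0 ≤ κ)
    (h : ∀ t s, Q s * P t * Q s = (κ : ℂ) • (Q s * R t * Q s)) :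
    ((((1 + √(Fintype.card T * Fintype.card S * κ) : ℝ) : ℂ) • (1 : Matrix n n ℂ)
      - ∑ t, P t) - ∑ s, Q s).PosSemidef := by
  let φ := toEuclideanCLM (n := n) (𝕜 := ℂ)
  have hφ : ∀ {A : Matrix n n ℂ}, IsStarProjection A → IsStarProjection (φ A) := fun {A} hA =>
    ⟨by rw [IsIdempotentElem, ← map_mul, hA.isIdempotentElem.eq],
      by rw [IsSelfAdjoint, ← map_star, hA.isSelfAdjoint.star_eq]⟩
  set c : ℝ := 1 + √(Fintype.card T * Fintype.card S * κ) with hc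
  have hbound := sum_norm_sq_le (P := fun t => φ (P t)) (Q := fun s => φ (Q s))
    (fun t => hφ (hP t)) (fun t t' ht => by rw [← map_mul, hP0 t t' ht, map_zero])
    (fun s => hφ (hQ s)) (fun s s' hs => by rw [← map_mul, hQ0 s s' hs, map_zero]) hκ
    (fun t s v => norm_sq_le_of_sandwich (hφ (hP t)) (hφ (hQ s)) (hφ (hR t)) hκ
      (by simp only [← map_mul, h t s, map_smul]) v)
  rw [← isPositive_toEuclideanLin_iff, ← coe_toEuclideanCLM_eq_toEuclideanLin,
    ContinuousLinearMap.isPositive_toLinearMap_iff, ContinuousLinearMap.isPositive_def']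
  change IsSelfAdjoint (φ _) ∧ ∀ x, 0 ≤ (φ _).reApplyInnerSelf x
  have e : ∀ {A : Matrix n n ℂ}, IsStarProjection A → ∀ v,
      RCLike.re (inner ℂ (φ A v) v) = ‖φ A v‖ ^ 2 := fun {A} hA v => by
    rw [inner_starProjection_left (hφ hA), inner_self_eq_norm_sq]
  constructor
  · rw [IsSelfAdjoint, ← map_star]
    simp only [star_sub, star_sum, star_smul, star_one, (hP _).isSelfAdjoint.star_eq,
      (hQ _).isSelfAdjoint.star_eq, RCLike.star_def, Complex.conj_ofReal]
  · intro v
    have hv := hbound v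
    rw [← hc] at hv
    have h1 : RCLike.re (inner ℂ ((c : ℂ) • v) v) = c * ‖v‖ ^ 2 := by
      rw [inner_smul_left, Complex.conj_ofReal, inner_self_eq_norm_sq_to_K]
      rw [← Complex.ofReal_re (c * ‖v‖ ^ 2), Complex.ofReal_mul, Complex.ofReal_pow]
      rfl
    rw [ContinuousLinearMap.reApplyInnerSelf_apply]
    simp only [map_sub, map_sum, map_smul, map_one, _root_.sub_apply,
      _root_.sum_apply, _root_.smul_apply,
      one_apply_eq_self, inner_sub_left, sum_inner, e (hP _), e (hQ _), h1]
    linarith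

/-- Main information–disturbance trade-off theorem, channel form:
if Bob can perfectly reconstruct each message `z ∈ 𝓔_t` (encoded in the `Z` basis)
and Eve each message `x ∈ 𝓕_s` (encoded in the `X` basis), then
`Σ_t |𝓔_t| + Σ_s |𝓕_s| ≤ 2^N (1 + (2 |T| |S| 2^(−N))^{1/2})`; in particular, if
`|T| ≤ 2^{l+1}` and `|S| ≤ 2^{m+1}`, the bound `2^N (1 + 2^{(l+m−N+3)/2})` holds. -/
theorem information_disturbance_tradeoff (N b e : ℕ) (hN : 1 ≤ N)
    (Λ : Matrix (Fin N → Bool) (Fin N → Bool) ℂ →ₗ[ℂ]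
      Matrix (Fin b × Fin e) (Fin b × Fin e) ℂ)
    (hTP : ∀ A, Matrix.trace (Λ A) = Matrix.trace A)
    (hCP : (choiMatrix N b e Λ).PosSemidef)
    {T : Type*} [Fintype T] {S : Type*} [Fintype S]
    (𝓔 : T → Finset (Fin N → Bool))
    (hEdisj : ∀ t t', t ≠ t' → Disjoint (𝓔 t) (𝓔 t'))
    (E : T → (Fin N → Bool) → Matrix (Fin b) (Fin b) ℂ)
    (hEproj : ∀ t, ∀ z ∈ 𝓔 t, E t z * E t z = E t z ∧ (E t z)ᴴ = E t z)
    (hEorth : ∀ t, ∀ z ∈ 𝓔 t, ∀ z' ∈ 𝓔 t, z ≠ z' → E t z * E t z' = 0)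
    (hBob : ∀ t, ∀ z ∈ 𝓔 t,
      Matrix.trace (Λ (Zproj N z) * (E t z ⊗ₖ (1 : Matrix (Fin e) (Fin e) ℂ))) = 1)
    (𝓕 : S → Finset (Fin N → Bool))
    (hFdisj : ∀ s s', s ≠ s' → Disjoint (𝓕 s) (𝓕 s'))
    (F : S → (Fin N → Bool) → Matrix (Fin e) (Fin e) ℂ)
    (hFproj : ∀ s, ∀ x ∈ 𝓕 s, F s x * F s x = F s x ∧ (F s x)ᴴ = F s x)
    (hForth : ∀ s, ∀ x ∈ 𝓕 s, ∀ x' ∈ 𝓕 s, x ≠ x' → F s x * F s x' = 0)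
    (hEve : ∀ s, ∀ x ∈ 𝓕 s,
      Matrix.trace (Λ (Xproj N x) * ((1 : Matrix (Fin b) (Fin b) ℂ) ⊗ₖ F s x)) = 1) :
    ((∑ t, ((𝓔 t).card : ℝ)) + ∑ s, ((𝓕 s).card : ℝ) ≤
      (2 : ℝ) ^ N *
        (1 + Real.sqrt (2 * (Fintype.card T) * (Fintype.card S) * ((2 : ℝ) ^ N)⁻¹))) ∧
    ∀ l m : ℕ, Fintype.card T ≤ 2 ^ (l + 1) → Fintype.card S ≤ 2 ^ (m + 1) →
      (∑ t, ((𝓔 t).card : ℝ)) + ∑ s, ((𝓕 s).card : ℝ) ≤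
        (2 : ℝ) ^ N * (1 + (2 : ℝ) ^ (((l : ℝ) + m - N + 3) / 2)) := by
  classical
  -- `P t`, `Q s` are the success projections of Bob and Eve; `R t` drops the constraint on `A`
  let P : T → Matrix ((Fin N → Bool) × (Fin b × Fin e)) ((Fin N → Bool) × (Fin b × Fin e)) ℂ :=
    fun t => ∑ z ∈ 𝓔 t, Zproj N z ⊗ₖ (E t z ⊗ₖ (1 : Matrix (Fin e) (Fin e) ℂ))
  let Q : S → Matrix ((Fin N → Bool) × (Fin b × Fin e)) ((Fin N → Bool) × (Fin b × Fin e)) ℂ :=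
    fun s => ∑ x ∈ 𝓕 s, Xproj N x ⊗ₖ ((1 : Matrix (Fin b) (Fin b) ℂ) ⊗ₖ F s x)
  let R : T → Matrix ((Fin N → Bool) × (Fin b × Fin e)) ((Fin N → Bool) × (Fin b × Fin e)) ℂ :=
    fun t => ∑ z ∈ 𝓔 t, (1 : Matrix (Fin N → Bool) (Fin N → Bool) ℂ) ⊗ₖ
      (E t z ⊗ₖ (1 : Matrix (Fin e) (Fin e) ℂ))
  have hE : ∀ t, ∀ z ∈ 𝓔 t, IsStarProjection (E t z) := fun t z hz =>
    ⟨(hEproj t z hz).1, (hEproj t z hz).2⟩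
  have hF : ∀ s, ∀ x ∈ 𝓕 s, IsStarProjection (F s x) := fun s x hx =>
    ⟨(hFproj s x hx).1, (hFproj s x hx).2⟩
  have hP : ∀ t, IsStarProjection (P t) := fun t =>
    isStarProjection_sum_kronecker isStarProjection_Zproj Zproj_mul_of_ne
      fun z hz => isStarProjection_kronecker (hE t z hz) (.one _)
  have hQ : ∀ s, IsStarProjection (Q s) := fun s =>
    isStarProjection_sum_kronecker isStarProjection_Xproj Xproj_mul_of_ne
      fun x hx => isStarProjection_kronecker (.one _) (hF s x hx)
  have hR : ∀ t, IsStarProjection (R t) := fun t => by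
    refine isStarProjection_sum
      (fun z hz => isStarProjection_kronecker (.one _) (isStarProjection_kronecker (hE t z hz) (.one _)))
      fun z hz z' hz' hne => ?_
    simp only [← mul_kronecker_mul, hEorth t z hz z' hz' hne, zero_kronecker, kronecker_zero]
  have hpos := posSemidef_sub_sum_sub_sum hP
    (fun t t' ht => sum_kronecker_mul_sum_kronecker_eq_zero Zproj_mul_of_ne (hEdisj t t' ht)) hQ
    (fun s s' hs => sum_kronecker_mul_sum_kronecker_eq_zero Xproj_mul_of_ne (hFdisj s s' hs)) hR
    (κ := ((2 : ℝ) ^ N)⁻¹) (by positivity)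
    (fun t s => sandwich (fun x => (isStarProjection_Xproj x).isIdempotentElem)
      (fun x z => by rw [Xproj_mul_Zproj_mul_Xproj]; push_cast; rfl) (hForth s))
  set c : ℝ := √(Fintype.card T * Fintype.card S * ((2 : ℝ) ^ N)⁻¹) with hc
  -- expand `0 ≤ tr (Θ ((1 + c) - ∑ P t - ∑ Q s))`, where `Θ` is the Choi matrix
  have htr := trace_mul_nonneg hCP hpos
  have h1 : trace (choiMatrix N b e Λ) = 1 := by
    have h := trace_choiMatrix_mul N b e Λ 1 1
    rw [one_kronecker_one, Matrix.mul_one, Matrix.mul_one, hTP, trace_transpose, trace_one] at h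
    rw [h]
    simp
  have hPtr : ∀ t, trace (choiMatrix N b e Λ * P t) = ((2 : ℂ) ^ N)⁻¹ * (𝓔 t).card := fun t => by
    rw [Finset.mul_sum, trace_sum, Finset.sum_congr rfl fun z hz => by
      rw [trace_choiMatrix_mul, Zproj_transpose, hBob t z hz, mul_one]]
    simp [mul_comm]
  have hQtr : ∀ s, trace (choiMatrix N b e Λ * Q s) = ((2 : ℂ) ^ N)⁻¹ * (𝓕 s).card := fun s => by
    rw [Finset.mul_sum, trace_sum, Finset.sum_congr rfl fun x hx => by
      rw [trace_choiMatrix_mul, Xproj_transpose, hEve s x hx, mul_one]]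
    simp [mul_comm]
  simp only [mul_sub, mul_smul_comm, mul_one, trace_sub, trace_smul, h1, smul_eq_mul] at htr
  rw [Finset.mul_sum, Finset.mul_sum, trace_sum, trace_sum, Finset.sum_congr rfl fun t _ => hPtr t,
    Finset.sum_congr rfl fun s _ => hQtr s, ← Finset.mul_sum, ← Finset.mul_sum] at htr
  have hreal : 0 ≤ (1 + c) - ((2 : ℝ) ^ N)⁻¹ * ∑ t, ((𝓔 t).card : ℝ)
      - ((2 : ℝ) ^ N)⁻¹ * ∑ s, ((𝓕 s).card : ℝ) := by
    refine Complex.zero_le_real.mp ?_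
    push_cast at htr ⊢
    exact htr
  have hN0 : (0 : ℝ) < 2 ^ N := by positivity
  have hmain : (∑ t, ((𝓔 t).card : ℝ)) + ∑ s, ((𝓕 s).card : ℝ) ≤ (2 : ℝ) ^ N * (1 + c) := by
    have h := mul_nonneg hN0.le hreal
    rw [mul_sub, mul_sub, mul_inv_cancel_left₀ hN0.ne', mul_inv_cancel_left₀ hN0.ne'] at h
    linarith
  have hle : (∑ t, ((𝓔 t).card : ℝ)) + ∑ s, ((𝓕 s).card : ℝ) ≤ (2 : ℝ) ^ N *
      (1 + √(2 * (Fintype.card T) * (Fintype.card S) * ((2 : ℝ) ^ N)⁻¹)) := by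
    refine hmain.trans ?_
    rw [hc]
    gcongr
    have : (0 : ℝ) ≤ Fintype.card T := by positivity
    linarith
  refine ⟨hle, fun l m hl hm => hle.trans ?_⟩
  have hl' : (Fintype.card T : ℝ) ≤ 2 ^ (l + 1) := by exact_mod_cast hl
  have hm' : (Fintype.card S : ℝ) ≤ 2 ^ (m + 1) := by exact_mod_cast hm
  gcongr
  calc √(2 * (Fintype.card T) * (Fintype.card S) * ((2 : ℝ) ^ N)⁻¹)
      ≤ √(2 * 2 ^ (l + 1) * 2 ^ (m + 1) * ((2 : ℝ) ^ N)⁻¹) := by gcongr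
    _ = √((2 : ℝ) ^ ((l : ℝ) + m - N + 3)) := by
      congr 1
      rw [show (l : ℝ) + m - N + 3 = ((l + m + 3 : ℕ) : ℝ) - (N : ℕ) by push_cast; ring,
        Real.rpow_sub (by norm_num), Real.rpow_natCast, Real.rpow_natCast]
      field_simp
      ring
    _ = (2 : ℝ) ^ (((l : ℝ) + m - N + 3) / 2) := by
      rw [Real.sqrt_eq_rpow, ← Real.rpow_mul (by norm_num)]
      congr 1
      ring
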